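/- Let ĝ(φ,θ) = Σ_{k=0}^{N} γ^k · Σ_τ P_k(φ,θ)(τ) · ∂_φ log(π φ s_k a_k) · Q̂ φ θ s_k a_k be the finite-horizon in-sim stochastic policy gradient, and suppose φ̄ : ℝ → ℝ is differentiable with ĝ(φ̄(θ), θ) = 0 for all θ (the in-sim policy is stationary for every simulator parameter). Fix θ₀ and set D = Σ_{k=0}^{N} γ^k Σ_τ P_k(τ) · ( ∂²_{φφ} log π(a_k|s_k) · Q̂ + ∂_φ log π(a_k|s_k) · ∂_φ Q̂ + ∂_φ log π(a_k|s_k) · Q̂ · Σ_{i=0}^{k} ∂_φ log π(a_i|s_i) ) and Nm = Σ_{k=0}^{N} γ^k Σ_τ P_k(τ) · ( ∂_φ log π(a_k|s_k) · ∂_θ Q̂ + ∂_φ log π(a_k|s_k) · Q̂ · Σ_{i=0}^{k-1} ∂_θ log f(s_{i+1}|s_i,a_i) ), both evaluated at (φ̄(θ₀), θ₀). If D ≠ 0, then the sensitivity of the in-sim policy parameter with respect to the simulator parameter is φ̄'(θ₀) = − Nm / D. (Theorem 1: sensitivity of the in-sim stochastic policy gradient, scalar-parameter form with fully decomposed Jacobians.)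 -/

import Mathlib

/-! Differentiating `ĝ (φ̄ θ) θ = 0` at `θ₀` by the chain rule gives `φ̄'(θ₀) * ∂_φ ĝ + ∂_θ ĝ = 0`,
so everything rests on identifying `∂_φ ĝ = D` and `∂_θ ĝ = Nm`. The trajectory weight is
`ρ0 (s_0)` times a product of `k + 1` policy factors, which depend on `φ` only, and `k` transition
factors, which depend on `θ` only. Differentiating such a product multiplies it by the sum of the
logarithmic derivatives of the factors concerned. -/

open Topology

section GraphDerivative

variable {𝕜 : Type*} [NontriviallyNormedField 𝕜]

theorem hasDerivAt_along_graph {E : Type*} [NormedAddCommGroup E] [NormedSpace 𝕜 E]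
    {g : 𝕜 → 𝕜 → E} {h : 𝕜 → 𝕜} {y h' : 𝕜} {gx gy : E}
    (hg : DifferentiableAt 𝕜 (fun p : 𝕜 × 𝕜 => g p.1 p.2) (h y, y))
    (hgx : HasDerivAt (fun x => g x y) gx (h y)) (hgy : HasDerivAt (g (h y)) gy y)
    (hh : HasDerivAt h h' y) :
    HasDerivAt (fun t => g (h t) t) (h' • gx + gy) y := by
  set L := fderiv 𝕜 (fun p : 𝕜 × 𝕜 => g p.1 p.2) (h y, y)
  have chain {u v : 𝕜 → 𝕜} {u' v' t : 𝕜} (hu : HasDerivAt u u' t) (hv : HasDerivAt v v' t)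
      (ht : (u t, v t) = (h y, y)) : HasDerivAt (fun x => g (u x) (v x)) (L (u', v')) t :=
    hg.hasFDerivAt.comp_hasDerivAt_of_eq t (hu.prodMk hv) ht.symm
  have hLx : L (1, 0) = gx :=
    (chain (hasDerivAt_id' (h y)) (hasDerivAt_const (h y) y) rfl).unique hgx
  have hLy : L (0, 1) = gy :=
    (chain (hasDerivAt_const y (h y)) (hasDerivAt_id' y) rfl).unique hgy
  have hL : L (h', 1) = h' • gx + gy := by simp [← hLx, ← hLy, ← map_smul, ← map_add]
  exact (chain hh (hasDerivAt_id' y) rfl).congr_deriv hL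

theorem implicit_deriv_eq_neg_div {g : 𝕜 → 𝕜 → 𝕜} {h : 𝕜 → 𝕜} {y h' gx gy c : 𝕜}
    (hg : DifferentiableAt 𝕜 (fun p : 𝕜 × 𝕜 => g p.1 p.2) (h y, y))
    (hgx : HasDerivAt (fun x => g x y) gx (h y)) (hgy : HasDerivAt (g (h y)) gy y)
    (hh : HasDerivAt h h' y) (hconst : ∀ᶠ t in 𝓝 y, g (h t) t = c) (hgx0 : gx ≠ 0) :
    h' = -gy / gx := by
  have htotal : h' • gx + gy = 0 :=
    (hasDerivAt_along_graph hg hgx hgy hh).unique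
      ((hasDerivAt_const y c).congr_of_eventuallyEq hconst)
  exact (eq_div_iff hgx0).2 (eq_neg_of_add_eq_zero_left htotal)

end GraphDerivative

section Score

/-- The score `∂ log p` of a likelihood `p` depending on a real parameter. It agrees with
`logDeriv p` wherever `p` is differentiable and nonzero. -/
noncomputable def score (p : ℝ → ℝ) : ℝ → ℝ :=
  deriv fun x => Real.log (p x)

theorem hasDerivAt_prod_score {ι : Type*} [Fintype ι] {u : ι → ℝ → ℝ} {x : ℝ}
    (hu : ∀ i, DifferentiableAt ℝ (u i) x) (hu0 : ∀ i, u i x ≠ 0) :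
    HasDerivAt (fun y => ∏ i, u i y) ((∏ i, u i x) * ∑ i, score (u i) x) x := by
  have hscore : ∑ i, score (u i) x = logDeriv (fun y => ∏ i, u i y) x := by
    rw [logDeriv_prod (fun i _ => hu0 i) fun i _ => hu i]
    exact Finset.sum_congr rfl fun i _ => Real.deriv_log_comp_eq_logDeriv (hu i) (hu0 i)
  have hprod0 : ∏ i, u i x ≠ 0 := Finset.prod_ne_zero_iff.2 fun i _ => hu0 i
  rw [hscore, logDeriv_apply, mul_div_cancel₀ _ hprod0]
  exact (DifferentiableAt.fun_finsetProd fun i _ => hu i).hasDerivAt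

theorem differentiableAt_score {p : ℝ → ℝ} {x : ℝ}
    (hp : ∀ᶠ y in 𝓝 x, DifferentiableAt ℝ p y) (hp' : DifferentiableAt ℝ (deriv p) x)
    (hp0 : p x ≠ 0) : DifferentiableAt ℝ (score p) x := by
  have hpx : DifferentiableAt ℝ p x := hp.self_of_nhds
  have hscore : score p =ᶠ[𝓝 x] fun y => deriv p y / p y := by
    filter_upwards [hp, hpx.continuousAt.eventually_ne hp0] with y hy hy0
    exact deriv.log hy hy0
  exact (hp'.fun_div hpx hp0).congr_of_eventuallyEq hscore

end Score

section Trajectory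

variable {S A : Type*}

/-- Trajectories `(s_0, …, s_k), (a_0, …, a_k)`: there are `k + 1` state-action pairs, hence `k`
transitions. -/
abbrev Trajectory (S A : Type*) (k : ℕ) : Type _ :=
  (Fin (k + 1) → S) × (Fin (k + 1) → A)

/-- The weight `P_k` of a trajectory under the initial weight `ρ0`, the policy `π` and the
transition kernel `f`, all at fixed parameter values. -/
def trajectoryWeight {k : ℕ} (ρ0 : S → ℝ) (π : S → A → ℝ) (f : S → A → S → ℝ)
    (τ : Trajectory S A k) : ℝ :=
  ρ0 (τ.1 0) * π (τ.1 (Fin.last k)) (τ.2 (Fin.last k)) *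
    ∏ i : Fin k,
      (f (τ.1 i.castSucc) (τ.2 i.castSucc) (τ.1 i.succ) * π (τ.1 i.castSucc) (τ.2 i.castSucc))

theorem trajectoryWeight_eq_mul_prod_mul_prod {k : ℕ} (ρ0 : S → ℝ) (π : S → A → ℝ)
    (f : S → A → S → ℝ) (τ : Trajectory S A k) :
    trajectoryWeight ρ0 π f τ = ρ0 (τ.1 0) * (∏ i, π (τ.1 i) (τ.2 i)) *
      ∏ i : Fin k, f (τ.1 i.castSucc) (τ.2 i.castSucc) (τ.1 i.succ) := by
  rw [trajectoryWeight, Finset.prod_mul_distrib, Fin.prod_univ_castSucc]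
  ring

theorem hasDerivAt_trajectoryWeight_policy {k : ℕ} (ρ0 : S → ℝ) {π : ℝ → S → A → ℝ}
    (f : S → A → S → ℝ) (τ : Trajectory S A k) {φ : ℝ}
    (hπ : ∀ s a, DifferentiableAt ℝ (fun φ => π φ s a) φ) (hπ0 : ∀ s a, π φ s a ≠ 0) :
    HasDerivAt (fun φ => trajectoryWeight ρ0 (π φ) f τ)
      (trajectoryWeight ρ0 (π φ) f τ * ∑ i, score (fun φ => π φ (τ.1 i) (τ.2 i)) φ) φ := by
  simp only [trajectoryWeight_eq_mul_prod_mul_prod]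
  refine (((hasDerivAt_prod_score (fun i => hπ (τ.1 i) (τ.2 i)) fun i => hπ0 _ _).const_mul
    (ρ0 (τ.1 0))).mul_const _).congr_deriv ?_
  ring

theorem hasDerivAt_trajectoryWeight_kernel {k : ℕ} (ρ0 : S → ℝ) (π : S → A → ℝ)
    {f : ℝ → S → A → S → ℝ} (τ : Trajectory S A k) {θ : ℝ}
    (hf : ∀ s a s', DifferentiableAt ℝ (fun θ => f θ s a s') θ) (hf0 : ∀ s a s', f θ s a s' ≠ 0) :
    HasDerivAt (fun θ => trajectoryWeight ρ0 π (f θ) τ)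
      (trajectoryWeight ρ0 π (f θ) τ *
        ∑ i : Fin k, score (fun θ => f θ (τ.1 i.castSucc) (τ.2 i.castSucc) (τ.1 i.succ)) θ) θ := by
  simp only [trajectoryWeight_eq_mul_prod_mul_prod]
  refine ((hasDerivAt_prod_score (fun i : Fin k => hf (τ.1 i.castSucc) (τ.2 i.castSucc)
    (τ.1 i.succ)) fun i => hf0 _ _ _).const_mul _).congr_deriv ?_
  ring

/-- The discounted sum of a trajectory functional `F` over all trajectories of length at most `N`,
the form shared by the policy gradient and its two Jacobians. Trajectory weights are part of `F`. -/
def discountedTrajectorySum [Fintype S] [Fintype A] (N : ℕ) (γ : ℝ)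
    (F : ∀ k, Trajectory S A k → ℝ) : ℝ :=
  ∑ k ∈ Finset.range (N + 1), γ ^ k * ∑ τ, F k τ

theorem hasDerivAt_discountedTrajectorySum [Fintype S] [Fintype A] (N : ℕ) (γ : ℝ)
    {F : ℝ → ∀ k, Trajectory S A k → ℝ} {F' : ∀ k, Trajectory S A k → ℝ} {x : ℝ}
    (hF : ∀ k τ, HasDerivAt (fun y => F y k τ) (F' k τ) x) :
    HasDerivAt (fun y => discountedTrajectorySum N γ (F y)) (discountedTrajectorySum N γ F') x :=
  HasDerivAt.fun_sum fun k _ => (HasDerivAt.fun_sum fun τ _ => hF k τ).const_mul _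

end Trajectory

section PolicyGradient

variable {S A : Type*} [Fintype S] [Fintype A] (N : ℕ) (γ : ℝ) (ρ0 : S → ℝ)
  (π : ℝ → S → A → ℝ) (f : ℝ → S → A → S → ℝ) (Qh : ℝ → ℝ → S → A → ℝ) (φ θ : ℝ)

/-- The finite-horizon in-sim stochastic policy gradient `ĝ(φ, θ)`, for the critic `Q̂ = Qh`. -/
noncomputable def inSimSPG : ℝ :=
  discountedTrajectorySum N γ fun k τ =>
    trajectoryWeight ρ0 (π φ) (f θ) τ *
      score (fun φ => π φ (τ.1 (Fin.last k)) (τ.2 (Fin.last k))) φ *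
      Qh φ θ (τ.1 (Fin.last k)) (τ.2 (Fin.last k))

/-- The decomposed Jacobian `D` of `ĝ` with respect to the policy parameter `φ`. -/
noncomputable def inSimSPGPolicyJacobian : ℝ :=
  discountedTrajectorySum N γ fun k τ =>
    trajectoryWeight ρ0 (π φ) (f θ) τ *
      (deriv (score fun φ => π φ (τ.1 (Fin.last k)) (τ.2 (Fin.last k))) φ *
          Qh φ θ (τ.1 (Fin.last k)) (τ.2 (Fin.last k)) +
        score (fun φ => π φ (τ.1 (Fin.last k)) (τ.2 (Fin.last k))) φ *
          deriv (fun φ => Qh φ θ (τ.1 (Fin.last k)) (τ.2 (Fin.last k))) φ +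
        score (fun φ => π φ (τ.1 (Fin.last k)) (τ.2 (Fin.last k))) φ *
          Qh φ θ (τ.1 (Fin.last k)) (τ.2 (Fin.last k)) *
          ∑ i, score (fun φ => π φ (τ.1 i) (τ.2 i)) φ)

/-- The decomposed Jacobian `Nm` of `ĝ` with respect to the simulator parameter `θ`. -/
noncomputable def inSimSPGSimulatorJacobian : ℝ :=
  discountedTrajectorySum N γ fun k τ =>
    trajectoryWeight ρ0 (π φ) (f θ) τ *
      (score (fun φ => π φ (τ.1 (Fin.last k)) (τ.2 (Fin.last k))) φ *
          deriv (fun θ => Qh φ θ (τ.1 (Fin.last k)) (τ.2 (Fin.last k))) θ +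
        score (fun φ => π φ (τ.1 (Fin.last k)) (τ.2 (Fin.last k))) φ *
          Qh φ θ (τ.1 (Fin.last k)) (τ.2 (Fin.last k)) *
          ∑ i : Fin k, score (fun θ => f θ (τ.1 i.castSucc) (τ.2 i.castSucc) (τ.1 i.succ)) θ)

variable {π f Qh φ θ}

theorem hasDerivAt_inSimSPG_policy
    (hπ : ∀ s a, ∀ᶠ φ' in 𝓝 φ, DifferentiableAt ℝ (fun φ => π φ s a) φ')
    (hπ' : ∀ s a, DifferentiableAt ℝ (deriv fun φ => π φ s a) φ) (hπ0 : ∀ s a, π φ s a ≠ 0)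
    (hQ : ∀ s a, DifferentiableAt ℝ (fun φ => Qh φ θ s a) φ) :
    HasDerivAt (fun φ => inSimSPG N γ ρ0 π f Qh φ θ)
      (inSimSPGPolicyJacobian N γ ρ0 π f Qh φ θ) φ := by
  refine hasDerivAt_discountedTrajectorySum N γ fun k τ => ?_
  have hP := hasDerivAt_trajectoryWeight_policy ρ0 (f θ) τ
    (fun s a => (hπ s a).self_of_nhds) hπ0
  have hscore (s a) := (differentiableAt_score (hπ s a) (hπ' s a) (hπ0 s a)).hasDerivAt
  refine ((hP.fun_mul (hscore _ _)).fun_mul (hQ _ _).hasDerivAt).congr_deriv ?_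
  ring

theorem hasDerivAt_inSimSPG_simulator
    (hf : ∀ s a s', DifferentiableAt ℝ (fun θ => f θ s a s') θ) (hf0 : ∀ s a s', f θ s a s' ≠ 0)
    (hQ : ∀ s a, DifferentiableAt ℝ (fun θ => Qh φ θ s a) θ) :
    HasDerivAt (inSimSPG N γ ρ0 π f Qh φ) (inSimSPGSimulatorJacobian N γ ρ0 π f Qh φ θ) θ := by
  refine hasDerivAt_discountedTrajectorySum N γ fun k τ => ?_
  have hP := hasDerivAt_trajectoryWeight_kernel ρ0 (π φ) τ hf hf0
  refine ((hP.mul_const _).fun_mul (hQ _ _).hasDerivAt).congr_deriv ?_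
  ring

theorem in_sim_spg_sensitivity_scalar_general {φbar : ℝ → ℝ} {θ₀ : ℝ}
    (hπpos : ∀ s a, 0 < π (φbar θ₀) s a)
    (hπ : ∀ s a, ∀ᶠ φ in 𝓝 (φbar θ₀), DifferentiableAt ℝ (fun φ => π φ s a) φ)
    (hπ' : ∀ s a, DifferentiableAt ℝ (deriv fun φ => π φ s a) (φbar θ₀))
    (hfpos : ∀ s a s', 0 < f θ₀ s a s')
    (hf : ∀ s a s', DifferentiableAt ℝ (fun θ => f θ s a s') θ₀)
    (hQφ : ∀ s a, DifferentiableAt ℝ (fun φ => Qh φ θ₀ s a) (φbar θ₀))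
    (hQθ : ∀ s a, DifferentiableAt ℝ (fun θ => Qh (φbar θ₀) θ s a) θ₀)
    (hg : DifferentiableAt ℝ (fun p : ℝ × ℝ => inSimSPG N γ ρ0 π f Qh p.1 p.2) (φbar θ₀, θ₀))
    (hφbar : DifferentiableAt ℝ φbar θ₀)
    (hstat : ∀ᶠ θ in 𝓝 θ₀, inSimSPG N γ ρ0 π f Qh (φbar θ) θ = 0)
    (hD : inSimSPGPolicyJacobian N γ ρ0 π f Qh (φbar θ₀) θ₀ ≠ 0) :
    deriv φbar θ₀ = -inSimSPGSimulatorJacobian N γ ρ0 π f Qh (φbar θ₀) θ₀ /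
      inSimSPGPolicyJacobian N γ ρ0 π f Qh (φbar θ₀) θ₀ :=
  implicit_deriv_eq_neg_div hg
    (hasDerivAt_inSimSPG_policy N γ ρ0 hπ hπ' (fun s a => (hπpos s a).ne') hQφ)
    (hasDerivAt_inSimSPG_simulator N γ ρ0 hf (fun s a s' => (hfpos s a s').ne') hQθ)
    hφbar.hasDerivAt hstat hD

end PolicyGradient

/-- Theorem 1 (sensitivity of the in-sim stochastic policy gradient, scalar-parameter
form): if the in-sim policy parameter `φ̄(θ)` is stationary for the in-sim SPG `ĝ` for
every simulator parameter `θ`, then `φ̄'(θ₀) = −Nm/D` where `D` and `Nm` are the fully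
decomposed Jacobians of `ĝ` w.r.t. `φ` and `θ` at `(φ̄(θ₀), θ₀)`. -/
theorem in_sim_spg_sensitivity_scalar
    {S A : Type*} [Fintype S] [Fintype A] [Nonempty S] [Nonempty A]
    (N : ℕ) (γ : ℝ) (ρ0 : S → ℝ)
    (π : ℝ → S → A → ℝ) (f : ℝ → S → A → S → ℝ)
    (Qh : ℝ → ℝ → S → A → ℝ)
    (hπpos : ∀ φ s a, 0 < π φ s a)
    (hπdiff : ∀ s a, Differentiable ℝ (fun φ => π φ s a))
    (hπdiff2 : ∀ s a, Differentiable ℝ (deriv (fun φ => π φ s a)))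
    (hfpos : ∀ θ s a s', 0 < f θ s a s')
    (hfdiff : ∀ s a s', Differentiable ℝ (fun θ => f θ s a s'))
    (hQdiffφ : ∀ θ s a, Differentiable ℝ (fun φ => Qh φ θ s a))
    (hQdiffθ : ∀ φ s a, Differentiable ℝ (fun θ => Qh φ θ s a))
    (P : ∀ k : ℕ, ℝ → ℝ → ((Fin (k + 1) → S) × (Fin (k + 1) → A)) → ℝ)
    (hP : ∀ k φ θ τ, P k φ θ τ =
      ρ0 (τ.1 0) * π φ (τ.1 (Fin.last k)) (τ.2 (Fin.last k)) *
        ∏ i : Fin k,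
          (f θ (τ.1 i.castSucc) (τ.2 i.castSucc) (τ.1 i.succ) *
            π φ (τ.1 i.castSucc) (τ.2 i.castSucc)))
    (g : ℝ → ℝ → ℝ)
    (hg : ∀ φ θ, g φ θ =
      ∑ k ∈ Finset.range (N + 1), γ ^ k *
        ∑ τ : (Fin (k + 1) → S) × (Fin (k + 1) → A),
          P k φ θ τ *
            deriv (fun φ' => Real.log (π φ' (τ.1 (Fin.last k)) (τ.2 (Fin.last k)))) φ *
            Qh φ θ (τ.1 (Fin.last k)) (τ.2 (Fin.last k)))
    (hgsmooth : ContDiff ℝ 1 (fun p : ℝ × ℝ => g p.1 p.2))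
    (φbar : ℝ → ℝ)
    (hφbar : Differentiable ℝ φbar)
    (hstat : ∀ θ, g (φbar θ) θ = 0)
    (θ₀ : ℝ) (D Nm : ℝ)
    (hD : D =
      ∑ k ∈ Finset.range (N + 1), γ ^ k *
        ∑ τ : (Fin (k + 1) → S) × (Fin (k + 1) → A),
          P k (φbar θ₀) θ₀ τ *
            (deriv (deriv (fun φ => Real.log (π φ (τ.1 (Fin.last k)) (τ.2 (Fin.last k))))) (φbar θ₀) *
                Qh (φbar θ₀) θ₀ (τ.1 (Fin.last k)) (τ.2 (Fin.last k)) +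
              deriv (fun φ => Real.log (π φ (τ.1 (Fin.last k)) (τ.2 (Fin.last k)))) (φbar θ₀) *
                deriv (fun φ => Qh φ θ₀ (τ.1 (Fin.last k)) (τ.2 (Fin.last k))) (φbar θ₀) +
              deriv (fun φ => Real.log (π φ (τ.1 (Fin.last k)) (τ.2 (Fin.last k)))) (φbar θ₀) *
                Qh (φbar θ₀) θ₀ (τ.1 (Fin.last k)) (τ.2 (Fin.last k)) *
                ∑ i : Fin (k + 1),
                  deriv (fun φ => Real.log (π φ (τ.1 i) (τ.2 i))) (φbar θ₀)))
    (hNm : Nm =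
      ∑ k ∈ Finset.range (N + 1), γ ^ k *
        ∑ τ : (Fin (k + 1) → S) × (Fin (k + 1) → A),
          P k (φbar θ₀) θ₀ τ *
            (deriv (fun φ => Real.log (π φ (τ.1 (Fin.last k)) (τ.2 (Fin.last k)))) (φbar θ₀) *
                deriv (fun θ => Qh (φbar θ₀) θ (τ.1 (Fin.last k)) (τ.2 (Fin.last k))) θ₀ +
              deriv (fun φ => Real.log (π φ (τ.1 (Fin.last k)) (τ.2 (Fin.last k)))) (φbar θ₀) *
                Qh (φbar θ₀) θ₀ (τ.1 (Fin.last k)) (τ.2 (Fin.last k)) *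
                ∑ i : Fin k,
                  deriv (fun θ =>
                    Real.log (f θ (τ.1 i.castSucc) (τ.2 i.castSucc) (τ.1 i.succ))) θ₀))
    (hDne : D ≠ 0) :
    deriv φbar θ₀ = -Nm / D := by
  obtain rfl : P = fun k φ θ τ => trajectoryWeight ρ0 (π φ) (f θ) τ := by ext; exact hP ..
  obtain rfl : g = inSimSPG N γ ρ0 π f Qh := by ext; exact hg ..
  subst hD hNm
  exact in_sim_spg_sensitivity_scalar_general N γ ρ0 (hπpos _)
    (fun s a => .of_forall (hπdiff s a)) (fun s a => hπdiff2 s a _) (hfpos _)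
    (fun s a s' => hfdiff s a s' _) (fun s a => hQdiffφ _ s a _) (fun s a => hQdiffθ _ s a _)
    (hgsmooth.differentiable one_ne_zero _) (hφbar _) (.of_forall hstat) hDne
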